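/- There is a constant c such that the following holds for every directed acyclic graph G as above and every m≥N. Let C be the clause ¬p_{i_1,j_1}∨…∨¬p_{i_k,j_k} with k≥1, 1=i_1<…<i_k≤n, each j_ℓ∈{1,…,m}, such that every vertex of dom(C) supports vertex 1. Let P be a set of vertices with dom(C)⊆P, and let L be a set of vertices with L∩P=∅ such that for every non-bypassed i_ℓ∈dom(C), each predecessor of i_ℓ in G lies in dom(C)∪L. Let Γ = Stone(G,m) ∪ {¬p_{i,j}∨r_j : i∈L, 1≤j≤m}. Then there is a regRTI derivation of C from Γ of size at most c·N·m², in which every variable used as a resolution variable is either some variable r_j or some variable p_{i,j} with i∉P. -/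

import Mathlib

open scoped Classical

/-! ### Clauses and literals -/

abbrev Lit (V : Type) := V × Bool
abbrev Clause (V : Type) := Finset (V × Bool)

/-- Propositional variables for the Stone principle: `p i j` and `r j`. -/
inductive SV where
  | p (i j : ℕ) : SV
  | r (j : ℕ) : SV
deriving DecidableEq

/-- A dag on vertices `1,…,N` with unique sink `1`, in which every non-source vertex
(the vertices `1,…,n`) has exactly the two predecessors `p1 i` and `p2 i`,
every edge `(i′,i)` satisfies `i′ > i`, and the sources are exactly `n+1,…,N`. -/
structure StoneDag where
  N : ℕ
  n : ℕ
  p1 : ℕ → ℕ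
  p2 : ℕ → ℕ
  n_lt_N : n < N
  p1_gt : ∀ i, 1 ≤ i → i ≤ n → i < p1 i
  p2_gt : ∀ i, 1 ≤ i → i ≤ n → i < p2 i
  p1_le : ∀ i, 1 ≤ i → i ≤ n → p1 i ≤ N
  p2_le : ∀ i, 1 ≤ i → i ≤ n → p2 i ≤ N
  p_ne : ∀ i, 1 ≤ i → i ≤ n → p1 i ≠ p2 i
  unique_sink : ∀ i, 2 ≤ i → i ≤ N → ∃ v, 1 ≤ v ∧ v ≤ n ∧ (p1 v = i ∨ p2 v = i)

/-- The clause set `Stone(G,m)`. -/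
def stoneClauses (G : StoneDag) (m : ℕ) : Set (Clause SV) :=
  { C | ∃ i, 1 ≤ i ∧ i ≤ G.N ∧
      C = (Finset.Icc 1 m).image (fun j => ((SV.p i j, true) : Lit SV)) } ∪
  { C | ∃ i j, G.n < i ∧ i ≤ G.N ∧ 1 ≤ j ∧ j ≤ m ∧
      C = {(SV.p i j, false), (SV.r j, true)} } ∪
  { C | ∃ j, 1 ≤ j ∧ j ≤ m ∧ C = {(SV.p 1 j, false), (SV.r j, false)} } ∪
  { C | ∃ i j j' j'', 1 ≤ i ∧ i ≤ G.n ∧ 1 ≤ j ∧ j ≤ m ∧ 1 ≤ j' ∧ j' ≤ m ∧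
      1 ≤ j'' ∧ j'' ≤ m ∧ j ≠ j' ∧ j ≠ j'' ∧
      C = {(SV.p (G.p1 i) j', false), (SV.r j', false),
           (SV.p (G.p2 i) j'', false), (SV.r j'', false),
           (SV.p i j, false), (SV.r j, true)} }

/-! ### Resolution inference rules -/

/-- `(A ∖ {x}) ∪ (B ∖ {¬x})`. -/
def wres {V : Type} [DecidableEq V] (x : V) (A B : Clause V) : Clause V :=
  A.erase (x, true) ∪ B.erase (x, false)

/-- w-resolution inference. -/
def wstep {V : Type} [DecidableEq V] (x : V) (A B C : Clause V) : Prop :=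
  C = wres x A B

/-- ordinary resolution inference. -/
def rstep {V : Type} [DecidableEq V] (x : V) (A B C : Clause V) : Prop :=
  (x, true) ∈ A ∧ (x, false) ∈ B ∧ C = wres x A B

/-- degenerate resolution inference. -/
def dstep {V : Type} [DecidableEq V] (x : V) (A B C : Clause V) : Prop :=
  ((x, true) ∈ A ∧ (x, false) ∈ B ∧ C = wres x A B) ∨
  ((x, true) ∈ A ∧ (x, false) ∉ B ∧ C = B) ∨
  ((x, true) ∉ A ∧ (x, false) ∈ B ∧ C = A) ∨
  ((x, true) ∉ A ∧ (x, false) ∉ B ∧ (C = A ∨ C = B))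

/-! ### Tree-like proofs -/

/-- Binary proof trees: each node is labeled with a clause, internal nodes also
with a resolution variable. -/
inductive PTree (V : Type) [DecidableEq V] where
  | leaf : Clause V → PTree V
  | node : Clause V → V → PTree V → PTree V → PTree V

namespace PTree

variable {V : Type} [DecidableEq V]

/-- The clause labeling the root. -/
def clause : PTree V → Clause V
  | leaf c => c
  | node c _ _ _ => c

/-- Number of nodes. -/
def size : PTree V → ℕ
  | leaf _ => 1
  | node _ _ t1 t2 => t1.size + t2.size + 1

/-- The set of variables used as resolution variables. -/
def resVars : PTree V → Finset V
  | leaf _ => ∅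
  | node _ x t1 t2 => insert x (t1.resVars ∪ t2.resVars)

/-- No variable is used as a resolution variable more than once on any
root-to-leaf path. -/
def regular : PTree V → Prop
  | leaf _ => True
  | node _ x t1 t2 => x ∉ t1.resVars ∧ x ∉ t2.resVars ∧ t1.regular ∧ t2.regular

/-- Every internal node is obtained from its children by the inference `step`. -/
def wf (step : V → Clause V → Clause V → Clause V → Prop) : PTree V → Prop
  | leaf _ => True
  | node c x t1 t2 => step x t1.clause t2.clause c ∧ t1.wf step ∧ t2.wf step

/-- All clauses occurring in the tree. -/
def clauses : PTree V → Set (Clause V)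
  | leaf c => {c}
  | node c _ t1 t2 => t1.clauses ∪ t2.clauses ∪ {c}

/-- Every leaf is labeled by a clause of `Γ` or by a clause occurring strictly
earlier in postorder; `S` is the set of clauses occurring before this subtree. -/
def lemmasOK (Γ : Set (Clause V)) : PTree V → Set (Clause V) → Prop
  | leaf c, S => c ∈ Γ ∨ c ∈ S
  | node _ _ t1 t2, S => t1.lemmasOK Γ S ∧ t2.lemmasOK Γ (S ∪ t1.clauses)

/-- Every leaf is labeled by a clause of `Γ`. -/
def leavesIn (Γ : Set (Clause V)) : PTree V → Prop
  | leaf c => c ∈ Γ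
  | node _ _ t1 t2 => t1.leavesIn Γ ∧ t2.leavesIn Γ

/-- Postorder scan computing, from the set `L` of clauses learned so far
(initially `Γ`), the pair of (i) the set of clauses learned after traversing the
subtree — a clause becomes learned when it is the final clause of an input
subderivation, i.e. a subderivation each of whose inferences has at least one
hypothesis that is already learned — and (ii) whether this subtree is an input
subderivation. -/
def scan : PTree V → Set (Clause V) → Set (Clause V) × Prop
  | leaf _, L => (L, True)
  | node c _ t1 t2, L =>
      let r1 := t1.scan L
      let r2 := t2.scan r1.1
      let inp : Prop := r1.2 ∧ r2.2 ∧ (t1.clause ∈ r1.1 ∨ t2.clause ∈ r2.1)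
      ({ d | d ∈ r2.1 ∨ (inp ∧ d = c) }, inp)

/-- Every leaf is labeled by a learned clause (a clause of the initial set `L`,
or one derived by an input subderivation strictly earlier in postorder). -/
def lemOK : PTree V → Set (Clause V) → Prop
  | leaf c, L => c ∈ L
  | node _ _ t1 t2, L => t1.lemOK L ∧ t2.lemOK (t1.scan L).1

end PTree

/-- regWRTL refutation of `Γ`. -/
def RegWRTLRefutation {V : Type} [DecidableEq V] (Γ : Set (Clause V)) (T : PTree V) : Prop :=
  T.clause = ∅ ∧ T.wf wstep ∧ T.regular ∧ T.lemmasOK Γ ∅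

/-- pool resolution refutation of `Γ`. -/
def PoolRefutation {V : Type} [DecidableEq V] (Γ : Set (Clause V)) (T : PTree V) : Prop :=
  T.clause = ∅ ∧ T.wf dstep ∧ T.regular ∧ T.lemmasOK Γ ∅

/-- regRTL refutation of `Γ`. -/
def RegRTLRefutation {V : Type} [DecidableEq V] (Γ : Set (Clause V)) (T : PTree V) : Prop :=
  T.clause = ∅ ∧ T.wf rstep ∧ T.regular ∧ T.lemmasOK Γ ∅

/-- regRTI refutation of `Γ`: all lemmas are input lemmas. -/
def RegRTIRefutation {V : Type} [DecidableEq V] (Γ : Set (Clause V)) (T : PTree V) : Prop :=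
  T.clause = ∅ ∧ T.wf rstep ∧ T.regular ∧ T.lemOK Γ

/-- regRTI derivation of the clause `D` from `Γ`. -/
def RegRTIDeriv {V : Type} [DecidableEq V] (Γ : Set (Clause V)) (D : Clause V)
    (T : PTree V) : Prop :=
  T.clause = D ∧ T.wf rstep ∧ T.regular ∧ T.lemOK Γ ∧
  ∀ x ∈ T.resVars, (x, true) ∉ D ∧ (x, false) ∉ D

/-- regular tree-like resolution derivation of the clause `D` from `Γ`. -/
def RegTreeDeriv {V : Type} [DecidableEq V] (Γ : Set (Clause V)) (D : Clause V)
    (T : PTree V) : Prop :=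
  T.clause = D ∧ T.wf rstep ∧ T.regular ∧ T.leavesIn Γ ∧
  ∀ x ∈ T.resVars, (x, true) ∉ D ∧ (x, false) ∉ D

/-! ### Dag-like derivations -/

/-- A dag-like resolution derivation: a sequence of `len` clauses, each an
axiom (`just i = none`) or obtained by resolution from two earlier clauses. -/
structure DagDeriv (V : Type) [DecidableEq V] where
  len : ℕ
  cl : ℕ → Clause V
  just : ℕ → Option (ℕ × ℕ × V)

namespace DagDeriv

variable {V : Type} [DecidableEq V]

/-- Validity relative to the initial clause set `Γ`. -/
def ok (D : DagDeriv V) (Γ : Set (Clause V)) : Prop :=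
  ∀ i, i < D.len →
    match D.just i with
    | none => D.cl i ∈ Γ
    | some (a, b, x) => a < i ∧ b < i ∧ rstep x (D.cl a) (D.cl b) (D.cl i)

/-- `j` is a premise of `i`. -/
def prem (D : DagDeriv V) (i j : ℕ) : Prop :=
  ∃ a b x, D.just i = some (a, b, x) ∧ (j = a ∨ j = b)

/-- `j` lies in the subderivation of `i` (is reachable from `i` in the dag). -/
def reach (D : DagDeriv V) : ℕ → ℕ → Prop := Relation.ReflTransGen D.prem

/-- `x` is the resolution variable of the inference at `i`. -/
def resAt (D : DagDeriv V) (i : ℕ) (x : V) : Prop := ∃ a b, D.just i = some (a, b, x)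

/-- No variable is used as resolution variable twice along a path of the dag. -/
def regular (D : DagDeriv V) : Prop :=
  ∀ i a b x, D.just i = some (a, b, x) →
    ∀ j, (D.reach a j ∨ D.reach b j) → ¬ D.resAt j x

/-- The subderivation of `i` uses `x` as a resolution variable. -/
def usesVar (D : DagDeriv V) (i : ℕ) (x : V) : Prop := ∃ j, D.reach i j ∧ D.resAt j x

end DagDeriv

/-! ### Supports, bypassing, and the sets `B`, `B⁺`, `S_ℓ^B(C)` for a clause
`C = ¬p_{i_1,j_1} ∨ … ∨ ¬p_{i_k,j_k}` given by `k` and the functions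
`I J : ℕ → ℕ` (with `I ℓ = i_ℓ`, `J ℓ = j_ℓ` for `1 ≤ ℓ ≤ k`). -/

/-- Index `ℓ` is bypassed. -/
def bypassed (k : ℕ) (J : ℕ → ℕ) (ℓ : ℕ) : Prop :=
  ∃ ℓ', ℓ < ℓ' ∧ ℓ' ≤ k ∧ J ℓ' = J ℓ

/-- `ℓ'` is the max-bypasser of `ℓ`. -/
def maxByp (k : ℕ) (J : ℕ → ℕ) (ℓ ℓ' : ℕ) : Prop :=
  ℓ < ℓ' ∧ ℓ' ≤ k ∧ J ℓ' = J ℓ ∧ ∀ a, ℓ < a → a ≤ k → J a = J ℓ → a ≤ ℓ'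

/-- `i_{ℓ'}` directly supports `i_ℓ`. -/
def dsup (G : StoneDag) (k : ℕ) (I J : ℕ → ℕ) (ℓ' ℓ : ℕ) : Prop :=
  1 ≤ ℓ ∧ ℓ < ℓ' ∧ ℓ' ≤ k ∧
  (maxByp k J ℓ ℓ' ∨
    (¬ bypassed k J ℓ ∧ (I ℓ' = G.p1 (I ℓ) ∨ I ℓ' = G.p2 (I ℓ))))

/-- `i_a` supports `i_b`: reflexive transitive closure of direct support. -/
def supp (G : StoneDag) (k : ℕ) (I J : ℕ → ℕ) : ℕ → ℕ → Prop :=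
  Relation.ReflTransGen (dsup G k I J)

/-- `dom(C)` as a set of vertices. -/
def domv (k : ℕ) (I : ℕ → ℕ) : Set ℕ := { v | ∃ a, 1 ≤ a ∧ a ≤ k ∧ I a = v }

/-- `S_ℓ(C)`: the set of vertices of `dom(C)` supporting `i_ℓ`. -/
def suppSet (G : StoneDag) (k : ℕ) (I J : ℕ → ℕ) (ℓ : ℕ) : Set ℕ :=
  { v | ∃ a, 1 ≤ a ∧ a ≤ k ∧ I a = v ∧ supp G k I J a ℓ }

/-- `i_ℓ ∈ B`: not bypassed and some predecessor outside `dom(C)`. -/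
def Bidx (G : StoneDag) (k : ℕ) (I J : ℕ → ℕ) (ℓ : ℕ) : Prop :=
  1 ≤ ℓ ∧ ℓ ≤ k ∧ ¬ bypassed k J ℓ ∧
  (G.p1 (I ℓ) ∉ domv k I ∨ G.p2 (I ℓ) ∉ domv k I)

/-- `i_ℓ ∈ B₁`: exactly one predecessor outside `dom(C)`. -/
def B1idx (G : StoneDag) (k : ℕ) (I J : ℕ → ℕ) (ℓ : ℕ) : Prop :=
  Bidx G k I J ℓ ∧ (G.p1 (I ℓ) ∈ domv k I ∨ G.p2 (I ℓ) ∈ domv k I)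

/-- `i_ℓ ∈ B₂`: both predecessors outside `dom(C)`. -/
def B2idx (G : StoneDag) (k : ℕ) (I J : ℕ → ℕ) (ℓ : ℕ) : Prop :=
  1 ≤ ℓ ∧ ℓ ≤ k ∧ ¬ bypassed k J ℓ ∧
  G.p1 (I ℓ) ∉ domv k I ∧ G.p2 (I ℓ) ∉ domv k I

/-- `i_ℓ ∈ B⁺`: in `B`, or bypassed with max-bypasser in `B`. -/
def Bplus (G : StoneDag) (k : ℕ) (I J : ℕ → ℕ) (ℓ : ℕ) : Prop :=
  Bidx G k I J ℓ ∨ (1 ≤ ℓ ∧ ℓ ≤ k ∧ ∃ ℓ', maxByp k J ℓ ℓ' ∧ Bidx G k I J ℓ')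

/-- Membership in `S_ℓ^B(C)` (on indices). -/
inductive SBmem (G : StoneDag) (k : ℕ) (I J : ℕ → ℕ) (ℓ : ℕ) : ℕ → Prop where
  | base : SBmem G k I J ℓ ℓ
  | byp (a b : ℕ) : SBmem G k I J ℓ a → (a = ℓ ∨ ¬ Bidx G k I J a) →
      maxByp k J a b → ¬ Bidx G k I J b → SBmem G k I J ℓ b
  | pred (a b : ℕ) : SBmem G k I J ℓ a → (a = ℓ ∨ ¬ Bidx G k I J a) →
      ¬ bypassed k J a → 1 ≤ b → b ≤ k →
      (I b = G.p1 (I a) ∨ I b = G.p2 (I a)) → SBmem G k I J ℓ b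

/-- The clause `C_ℓ`. -/
noncomputable def Clc (G : StoneDag) (k : ℕ) (I J : ℕ → ℕ) (ℓ : ℕ) : Clause SV :=
  ((Finset.Icc 1 k).filter fun a =>
      SBmem G k I J ℓ a ∧ ¬(a = ℓ ∧ bypassed k J ℓ)).image
    fun a => ((SV.p (I a) (J a), false) : Lit SV)

/-- The clause `E_ℓ`. -/
noncomputable def Elc (G : StoneDag) (k : ℕ) (I J : ℕ → ℕ) (ℓ : ℕ) : Clause SV :=
  ((Finset.Icc 1 k).filter fun a =>
      SBmem G k I J ℓ a ∧ Bplus G k I J a ∧ (Bidx G k I J ℓ → a ≠ ℓ)).image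
    fun a => ((SV.r (J a), false) : Lit SV)

/-- `t_1,…,t_r` enumerates the indices of `B ∪ {1}` in decreasing order. -/
def EnumB (G : StoneDag) (k : ℕ) (I J : ℕ → ℕ) (r : ℕ) (t : ℕ → ℕ) : Prop :=
  (∀ q, 1 ≤ q → q ≤ r → (Bidx G k I J (t q) ∨ t q = 1)) ∧
  (∀ q q', 1 ≤ q → q < q' → q' ≤ r → t q' < t q) ∧
  (∀ ℓ, Bidx G k I J ℓ ∨ ℓ = 1 → ∃ q, 1 ≤ q ∧ q ≤ r ∧ t q = ℓ)

/-- The clause `F_q`. -/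
noncomputable def Fcl (G : StoneDag) (k : ℕ) (I J : ℕ → ℕ) (r : ℕ) (t : ℕ → ℕ)
    (q : ℕ) : Clause SV :=
  if q = r ∧ ¬ Bidx G k I J 1 then Elc G k I J 1
  else (Finset.Icc 1 (q - 1)).image fun q' => ((SV.r (J (t q')), false) : Lit SV)

/-- The standing hypotheses on the clause `C`: `k ≥ 1`, `1 = i_1 < … < i_k ≤ n`,
`j_ℓ ∈ {1,…,m}`, and every vertex of `dom(C)` supports vertex `1`. -/
def GoodC (G : StoneDag) (m k : ℕ) (I J : ℕ → ℕ) : Prop :=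
  1 ≤ k ∧ I 1 = 1 ∧ I k ≤ G.n ∧
  (∀ a b, 1 ≤ a → a < b → b ≤ k → I a < I b) ∧
  (∀ a, 1 ≤ a → a ≤ k → 1 ≤ J a ∧ J a ≤ m) ∧
  (∀ a, 1 ≤ a → a ≤ k → supp G k I J a 1)

/-!
Walk along the clause from `i_1 = 1`, starting from `¬p_{1,j_1} ∨ ¬r_{j_1}`, and maintain a clause
`¬p(S) ∨ ¬r(U)`: at a non-bypassed `i_a` whose stone still occurs in `U`, resolve on `r_{j_a}` with
a clause expressing that `j_a` is red once the stones of the predecessors of `i_a` are. The stone of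
a bypassed vertex waits in `U` until its max-bypasser is reached, so `S` ends up closed under direct
support and hence is everything that supports `i_1`. A predecessor in `L` has only red stones and is
resolved away; to stay regular, the elimination leaves `¬r_x` in place for each stone `x` that
occurs later in the clause, because `r_x` is still to be resolved on below. No lemmas are needed.
-/

/-! ### Tree-like derivations -/

section TreeLike

variable {V : Type} [DecidableEq V]

namespace PTree

lemma subset_scan (T : PTree V) (L : Set (Clause V)) : L ⊆ (T.scan L).1 := by
  induction T generalizing L with
  | leaf => exact subset_rfl
  | node _ _ _ _ h₁ h₂ => exact fun d hd => Or.inl (h₂ _ (h₁ _ hd))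

lemma leavesIn.lemOK {Γ L : Set (Clause V)} {T : PTree V} (h : T.leavesIn Γ) (hL : Γ ⊆ L) :
    T.lemOK L := by
  induction T generalizing L with
  | leaf => exact hL h
  | node _ _ t₁ _ h₁ h₂ => exact ⟨h₁ h.1 hL, h₂ h.2 (hL.trans (subset_scan t₁ L))⟩

end PTree

lemma RegTreeDeriv.regRTIDeriv {Γ : Set (Clause V)} {D : Clause V} {T : PTree V}
    (h : RegTreeDeriv Γ D T) : RegRTIDeriv Γ D T :=
  let ⟨hD, hwf, hreg, hleaves, hvars⟩ := h
  ⟨hD, hwf, hreg, hleaves.lemOK subset_rfl, hvars⟩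

/-- `D` has a regular tree-like resolution derivation from `Γ` of size at most `s`, all of whose
resolution variables lie in `W`. Unlike in `RegTreeDeriv`, they may occur in `D`. -/
def TreeDerivable (Γ : Set (Clause V)) (D : Clause V) (W : Set V) (s : ℕ) : Prop :=
  ∃ T : PTree V, T.clause = D ∧ T.wf rstep ∧ T.regular ∧ T.leavesIn Γ ∧
    (∀ x ∈ T.resVars, x ∈ W) ∧ T.size ≤ s

lemma wres_insert_insert {x : V} {A B : Clause V} (hA : (x, true) ∉ A) (hB : (x, false) ∉ B) :
    wres x (insert (x, true) A) (insert (x, false) B) = A ∪ B := by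
  rw [wres, Finset.erase_insert hA, Finset.erase_insert hB]

namespace TreeDerivable

variable {Γ : Set (Clause V)} {A B D : Clause V} {W W' : Set V} {s s' : ℕ}

lemma of_mem (h : D ∈ Γ) : TreeDerivable Γ D W 1 :=
  ⟨.leaf D, rfl, trivial, trivial, h, by simp [PTree.resVars], le_rfl⟩

lemma mono (h : TreeDerivable Γ D W s) (hW : W ⊆ W') (hs : s ≤ s') : TreeDerivable Γ D W' s' :=
  let ⟨T, hD, hwf, hreg, hleaves, hvars, hsize⟩ := h
  ⟨T, hD, hwf, hreg, hleaves, fun x hx => hW (hvars x hx), hsize.trans hs⟩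

lemma resolve {x : V} (hA : TreeDerivable Γ (insert (x, true) A) W s)
    (hB : TreeDerivable Γ (insert (x, false) B) W s')
    (hxA : (x, true) ∉ A) (hxB : (x, false) ∉ B) (hx : x ∉ W) :
    TreeDerivable Γ (A ∪ B) (insert x W) (s + s' + 1) := by
  obtain ⟨T, hT, hwf, hreg, hleaves, hvars, hsize⟩ := hA
  obtain ⟨T', hT', hwf', hreg', hleaves', hvars', hsize'⟩ := hB
  refine ⟨.node (A ∪ B) x T T', rfl, ⟨?_, hwf, hwf'⟩,
    ⟨fun h => hx (hvars x h), fun h => hx (hvars' x h), hreg, hreg'⟩, ⟨hleaves, hleaves'⟩, ?_, ?_⟩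
  · rw [hT, hT']
    exact ⟨Finset.mem_insert_self _ _, Finset.mem_insert_self _ _,
      (wres_insert_insert hxA hxB).symm⟩
  · intro y hy
    simp only [PTree.resVars, Finset.mem_insert, Finset.mem_union] at hy
    exact hy.imp_right (Or.rec (hvars y) (hvars' y))
  · simp only [PTree.size]
    omega

lemma hyperresolve {ι : Type*} {f : ι → V} (hf : f.Injective) {X : Finset ι}
    {Q : ι → Clause V} {t : ℕ}
    (hX : TreeDerivable Γ (X.image (fun i => (f i, true)) ∪ A) W t)
    (h : ∀ i ∈ X, TreeDerivable Γ (insert (f i, false) (Q i)) W s)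
    (hA : ∀ i ∈ X, (f i, true) ∉ A) (hQ : ∀ i ∈ X, ∀ j ∈ X, ∀ b, (f j, b) ∉ Q i)
    (hW : ∀ i ∈ X, f i ∉ W) :
    TreeDerivable Γ (A ∪ X.biUnion Q) (W ∪ f '' X) (t + X.card * (s + 1)) := by
  induction X using Finset.induction_on generalizing A W t with
  | empty => simpa using hX
  | insert i X hi ih =>
    simp only [Finset.forall_mem_insert] at h hA hQ hW
    rw [Finset.image_insert, Finset.insert_union] at hX
    have hstep := hX.resolve h.1 (by simp [hf.eq_iff, hi, hA.1]) (hQ.1.1 false) hW.1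
    rw [Finset.union_assoc] at hstep
    refine (congrArg₂ (TreeDerivable Γ · · _) ?_ ?_).mp <|
      (ih hstep (fun j hj => (h.2 j hj).mono (Set.subset_insert _ _) le_rfl) ?_
        (fun j hj => (hQ.2 j hj).2) ?_).mono subset_rfl ?_
    · rw [Finset.biUnion_insert, Finset.union_assoc]
    · simp [Set.image_insert_eq, Set.union_insert, Set.insert_union]
    · exact fun j hj => by simp [hA.2 j hj, hQ.1.2 j hj]
    · exact fun j hj => by simp [hf.eq_iff, hW.2 j hj, ne_of_mem_of_not_mem hj hi]
    · rw [Finset.card_insert_of_notMem hi]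
      linarith

lemma exists_regTreeDeriv (h : TreeDerivable Γ D W s) (hD : ∀ x ∈ W, ∀ b, (x, b) ∉ D) :
    ∃ T, RegTreeDeriv Γ D T ∧ T.size ≤ s ∧ ∀ x ∈ T.resVars, x ∈ W :=
  let ⟨T, hT, hwf, hreg, hleaves, hvars, hsize⟩ := h
  ⟨T, ⟨hT, hwf, hreg, hleaves, fun x hx => ⟨hD x (hvars x hx) true, hD x (hvars x hx) false⟩⟩,
    hsize, hvars⟩

end TreeDerivable

end TreeLike

/-! ### Eliminating a vertex all of whose stones are red -/

/-- The clause `⋁ ¬r_j` over `j ∈ R`. -/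
def negR (R : Finset ℕ) : Clause SV := R.image fun j => (SV.r j, false)

/-- The clause `⋁ ¬p_{i_a,j_a}` over the indices `a ∈ S`. -/
def negP (I J : ℕ → ℕ) (S : Finset ℕ) : Clause SV := S.image fun a => (SV.p (I a) (J a), false)

/-- The variables allowed for resolution when the vertices in `V` may be eliminated and the stones
in `R` are reserved for later: `p_{v,j}` with `v ∈ V` and `r_z` with `z ∉ R`. -/
def freeVars (V : Set ℕ) (R : Finset ℕ) : Set SV :=
  {x | match x with
    | .p v _ => v ∈ V
    | .r z => z ∉ R}

section Elimination

variable {Γ : Set (Clause SV)} {K : Clause SV} {V V' : Set ℕ} {R R' : Finset ℕ} {m v x j s : ℕ}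

@[simp] lemma r_mem_freeVars : SV.r x ∈ freeVars V R ↔ x ∉ R := Iff.rfl

@[simp] lemma p_mem_freeVars : SV.p v x ∈ freeVars V R ↔ v ∈ V := Iff.rfl

lemma freeVars_subset (hV : V ⊆ V') (hR : R' ⊆ R) : freeVars V R ⊆ freeVars V' R' := by
  rintro (_ | _) h
  exacts [hV h, fun h' => h (hR h')]

@[simp] lemma r_mem_negR {b : Bool} : (SV.r x, b) ∈ negR R ↔ x ∈ R ∧ b = false := by
  cases b <;> simp [negR]

@[simp] lemma p_notMem_negR {b : Bool} : (SV.p v x, b) ∉ negR R := by simp [negR]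

/-- For reserved `x`, `r_x` is resolved on closer to the root, so `¬r_x` has to stay. -/
lemma TreeDerivable.resolve_red_stone
    (hred : ({(SV.p v x, false), (SV.r x, true)} : Clause SV) ∈ Γ)
    (hKx : (SV.r x, false) ∈ K → x ∈ R)
    (h : TreeDerivable Γ (insert (SV.r x, false) (insert (SV.p v x, false) K))
      (freeVars V (insert x R)) s) :
    TreeDerivable Γ (insert (SV.p v x, false) (K ∪ negR (R ∩ {x}))) (freeVars V R) (s + 2) := by
  by_cases hx : x ∈ R
  · rw [Finset.inter_singleton_of_mem hx, Finset.union_comm]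
    rw [Finset.insert_comm] at h
    exact h.mono (freeVars_subset subset_rfl (Finset.subset_insert _ _)) (by omega)
  · rw [Finset.pair_comm] at hred
    have hres := (of_mem hred).resolve h (by simp) (by simp [mt hKx hx]) (by simp)
    rw [Finset.inter_singleton_of_notMem hx]
    refine (congrArg (TreeDerivable Γ · _ _) ?_).mp (hres.mono ?_ (by omega : _ ≤ s + 2))
    · simp [negR]
    · exact Set.insert_subset hx (freeVars_subset subset_rfl (Finset.subset_insert _ _))

lemma biUnion_union_negR {X : Finset ℕ} (hR : R ⊆ X) (hKj : (SV.r j, true) ∈ K)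
    (hX : ∃ x ∈ X, x ≠ j) :
    X.biUnion (fun x => if x = j then {(SV.r j, true)} else K ∪ negR (R ∩ {x})) =
      K ∪ negR (R.erase j) := by
  apply Finset.Subset.antisymm
  · refine Finset.biUnion_subset.2 fun y _ => ?_
    by_cases hyj : y = j
    · simp [hyj, hKj]
    · rw [if_neg hyj]
      refine Finset.union_subset_union_right (Finset.image_subset_image fun z hz => ?_)
      obtain ⟨hzR, hzy⟩ := Finset.mem_inter.1 hz
      exact Finset.mem_erase.2 ⟨(Finset.mem_singleton.1 hzy).trans_ne hyj, hzR⟩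
  · refine Finset.union_subset (fun l hl => ?_) fun l hl => ?_
    · obtain ⟨x, hx, hxj⟩ := hX
      exact Finset.mem_biUnion.2 ⟨x, hx, by simp [hxj, hl]⟩
    · obtain ⟨y, hy, rfl⟩ := Finset.mem_image.1 hl
      obtain ⟨hyj, hyR⟩ := Finset.mem_erase.1 hy
      exact Finset.mem_biUnion.2 ⟨y, hR hyR, by simp [hyj, hyR]⟩

lemma TreeDerivable.eliminate_red_vertex (hm : 2 ≤ m)
    (hstone : (Finset.Icc 1 m).image (fun x => ((SV.p v x, true) : Lit SV)) ∈ Γ)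
    (hred : ∀ x ∈ Finset.Icc 1 m, ({(SV.p v x, false), (SV.r x, true)} : Clause SV) ∈ Γ)
    (hKj : (SV.r j, true) ∈ K) (hKv : ∀ x b, (SV.p v x, b) ∉ K)
    (hKR : ∀ x, (SV.r x, false) ∈ K → x ∈ R) (hR : R ⊆ Finset.Icc 1 m) (hv : v ∈ V)
    (h : ∀ x ∈ Finset.Icc 1 m, x ≠ j →
      TreeDerivable Γ (insert (SV.r x, false) (insert (SV.p v x, false) K))
        (freeVars (V \ {v}) (insert x R)) s) :
    TreeDerivable Γ (K ∪ negR (R.erase j)) (freeVars V R) (m * (s + 3) + 1) := by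
  -- The induction clause does not apply to `x = j`, but there `r_j` is at hand.
  let Q x : Clause SV := if x = j then {(SV.r j, true)} else K ∪ negR (R ∩ {x})
  have hQ x (hx : x ∈ Finset.Icc 1 m) :
      TreeDerivable Γ (insert (SV.p v x, false) (Q x)) (freeVars (V \ {v}) R) (s + 2) := by
    by_cases hxj : x = j
    · subst hxj
      simpa only [Q, if_true] using (of_mem (hred x hx)).mono subset_rfl (by omega)
    · simpa only [Q, if_neg hxj] using (h x hx hxj).resolve_red_stone (hred x hx) (hKR x)
  have hunion : (Finset.Icc 1 m).biUnion Q = K ∪ negR (R.erase j) :=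
    biUnion_union_negR hR hKj
      (Finset.exists_mem_ne (by rwa [Nat.card_Icc, Nat.add_sub_cancel]) j)
  have hres := hyperresolve (f := SV.p v) (A := ∅) (fun _ _ h => (SV.p.inj h).2)
    (by simpa only [Finset.union_empty] using of_mem hstone) hQ (by simp)
    (fun x _ y _ b => by dsimp only [Q]; split_ifs <;> simp [hKv]) (by simp)
  rw [Finset.empty_union, hunion, Nat.card_Icc, add_comm 1] at hres
  refine hres.mono (Set.union_subset (freeVars_subset Set.sdiff_subset subset_rfl) ?_) (by simp)
  rintro _ ⟨x, -, rfl⟩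
  exact hv

end Elimination

/-! ### The later stones and the direct supporters of an index -/

/-- The stones carried by the vertices `i_a,…,i_k`. -/
def stonesFrom (k : ℕ) (J : ℕ → ℕ) (a : ℕ) : Finset ℕ := (Finset.Icc a k).image J

/-- The indices `b` with `i_b = v`: at most one, and none if `v ∉ dom(C)`. -/
def indicesAt (k : ℕ) (I : ℕ → ℕ) (v : ℕ) : Finset ℕ := {b ∈ Finset.Icc 1 k | I b = v}

section Indices

variable {G : StoneDag} {k a b v x : ℕ} {I J : ℕ → ℕ}

lemma mem_stonesFrom : x ∈ stonesFrom k J a ↔ ∃ b, (a ≤ b ∧ b ≤ k) ∧ J b = x := by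
  simp [stonesFrom]

lemma bypassed_iff_mem_stonesFrom : bypassed k J a ↔ J a ∈ stonesFrom k J (a + 1) := by
  simp only [bypassed, mem_stonesFrom, Nat.lt_iff_add_one_le, and_assoc]

lemma stonesFrom_eq_insert (ha : a ≤ k) :
    stonesFrom k J a = insert (J a) (stonesFrom k J (a + 1)) := by
  rw [stonesFrom, stonesFrom, ← Finset.insert_Icc_add_one_left_eq_Icc ha, Finset.image_insert]

lemma stonesFrom_succ_subset : stonesFrom k J (a + 1) ⊆ stonesFrom k J a :=
  Finset.image_subset_image (Finset.Icc_subset_Icc_left a.le_succ)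

@[simp] lemma mem_indicesAt : b ∈ indicesAt k I v ↔ (1 ≤ b ∧ b ≤ k) ∧ I b = v := by
  simp [indicesAt]

lemma indicesAt_eq_empty (hv : v ∉ domv k I) : indicesAt k I v = ∅ := by
  refine Finset.eq_empty_of_forall_notMem fun b hb => hv ?_
  obtain ⟨⟨hb, hbk⟩, hbv⟩ := mem_indicesAt.1 hb
  exact ⟨b, hb, hbk, hbv⟩

namespace GoodC

variable {m : ℕ}

lemma strictMonoOn (hC : GoodC G m k I J) : StrictMonoOn I (Set.Icc 1 k) :=
  fun a ha b hb hab => hC.2.2.2.1 a b ha.1 hab hb.2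

lemma one_le_vertex (hC : GoodC G m k I J) (ha : a ∈ Set.Icc 1 k) : 1 ≤ I a :=
  hC.2.1.symm.trans_le (hC.strictMonoOn.monotoneOn ⟨le_rfl, hC.1⟩ ha ha.1)

lemma vertex_le (hC : GoodC G m k I J) (ha : a ∈ Set.Icc 1 k) : I a ≤ G.n :=
  (hC.strictMonoOn.monotoneOn ha ⟨hC.1, le_rfl⟩ ha.2).trans hC.2.2.1

lemma length_le (hC : GoodC G m k I J) : k ≤ G.n := by
  simpa using Finset.card_le_card_of_injOn (s := Finset.Icc 1 k) (t := Finset.Icc 1 G.n) I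
    (fun a ha => by
      rw [Finset.coe_Icc] at ha ⊢
      exact ⟨hC.one_le_vertex ha, hC.vertex_le ha⟩)
    (by simpa using hC.strictMonoOn.injOn)

lemma stone_mem (hC : GoodC G m k I J) (ha : a ∈ Set.Icc 1 k) : J a ∈ Finset.Icc 1 m :=
  Finset.mem_Icc.2 (hC.2.2.2.2.1 a ha.1 ha.2)

lemma stonesFrom_subset (hC : GoodC G m k I J) (ha : 1 ≤ a) : stonesFrom k J a ⊆ Finset.Icc 1 m :=
  Finset.image_subset_iff.2 fun b hb => by
    rw [Finset.mem_Icc] at hb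
    exact hC.stone_mem ⟨ha.trans hb.1, hb.2⟩

lemma indicesAt_vertex (hC : GoodC G m k I J) (ha : a ∈ Set.Icc 1 k) :
    indicesAt k I (I a) = {a} := by
  ext b
  rw [mem_indicesAt, Finset.mem_singleton]
  exact ⟨fun ⟨hb, h⟩ => hC.strictMonoOn.injOn hb ha h, by rintro rfl; exact ⟨ha, rfl⟩⟩

lemma lt_of_mem_indicesAt (hC : GoodC G m k I J) (ha : a ∈ Set.Icc 1 k) (hv : I a < v)
    (hb : b ∈ indicesAt k I v) : a < b := by
  obtain ⟨hbk, rfl⟩ := mem_indicesAt.1 hb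
  exact (hC.strictMonoOn.lt_iff_lt ha hbk).1 hv

end GoodC

end Indices

/-! ### Redness of the stone of a non-bypassed vertex -/

/-- The Stone clauses together with the clauses `¬p_{i,j} ∨ r_j` for `i ∈ L`. -/
def stoneWithLearned (G : StoneDag) (m : ℕ) (L : Set ℕ) : Set (Clause SV) :=
  stoneClauses G m ∪
    { C | ∃ i j, i ∈ L ∧ 1 ≤ j ∧ j ≤ m ∧ C = {(SV.p i j, false), (SV.r j, true)} }

/-- The stones `x` whose literals `¬r_x` remain once the predecessor `v` of `i_a` has been dealt
with: the stone on `v` if `v ∈ dom(C)`, all reserved stones if `v ∈ L`. -/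
noncomputable def keptStones (k : ℕ) (I J : ℕ → ℕ) (L : Set ℕ) (a v : ℕ) : Finset ℕ :=
  if v ∈ L then stonesFrom k J (a + 1) else (indicesAt k I v).image J

/-- The indices `b` for which `i_b` is a predecessor of `i_a`. -/
def predIndices (G : StoneDag) (k : ℕ) (I : ℕ → ℕ) (a : ℕ) : Finset ℕ :=
  indicesAt k I (G.p1 (I a)) ∪ indicesAt k I (G.p2 (I a))

/-- The stones `x` whose literals `¬r_x` remain once both predecessors of `i_a` have been dealt
with. -/
noncomputable def predStones (G : StoneDag) (k : ℕ) (I J : ℕ → ℕ) (L : Set ℕ) (a : ℕ) :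
    Finset ℕ :=
  keptStones k I J L a (G.p1 (I a)) ∪ keptStones k I J L a (G.p2 (I a))

section Redness

variable {G : StoneDag} {m k a b v s : ℕ} {I J : ℕ → ℕ} {L V : Set ℕ} {R S : Finset ℕ}
  {K : Clause SV}

lemma stone_clause_mem (hv : 1 ≤ v) (hvN : v ≤ G.N) :
    (Finset.Icc 1 m).image (fun x => ((SV.p v x, true) : Lit SV)) ∈ stoneWithLearned G m L :=
  Or.inl (Or.inl (Or.inl (Or.inl ⟨v, hv, hvN, rfl⟩)))

lemma sink_clause_mem (hb : b ∈ Finset.Icc 1 m) :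
    ({(SV.p 1 b, false), (SV.r b, false)} : Clause SV) ∈ stoneWithLearned G m L :=
  have hb := Finset.mem_Icc.1 hb
  Or.inl (Or.inl (Or.inr ⟨b, hb.1, hb.2, rfl⟩))

lemma learned_clause_mem (hv : v ∈ L) (hb : b ∈ Finset.Icc 1 m) :
    ({(SV.p v b, false), (SV.r b, true)} : Clause SV) ∈ stoneWithLearned G m L :=
  have hb := Finset.mem_Icc.1 hb
  Or.inr ⟨v, b, hv, hb.1, hb.2, rfl⟩

lemma induction_clause_mem {i j x y : ℕ} (hi : 1 ≤ i) (hin : i ≤ G.n) (hj : j ∈ Finset.Icc 1 m)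
    (hx : x ∈ Finset.Icc 1 m) (hy : y ∈ Finset.Icc 1 m) (hxj : x ≠ j) (hyj : y ≠ j) :
    ({(SV.p (G.p1 i) x, false), (SV.r x, false), (SV.p (G.p2 i) y, false), (SV.r y, false),
      (SV.p i j, false), (SV.r j, true)} : Clause SV) ∈ stoneWithLearned G m L := by
  rw [Finset.mem_Icc] at hj hx hy
  exact Or.inl (Or.inr ⟨i, j, x, y, hi, hin, hj.1, hj.2, hx.1, hx.2, hy.1, hy.2, hxj.symm,
    hyj.symm, rfl⟩)

lemma keptStones_subset (hC : GoodC G m k I J) (ha : a ∈ Set.Icc 1 k) (hv : I a < v) :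
    keptStones k I J L a v ⊆ stonesFrom k J (a + 1) := by
  rw [keptStones]
  split_ifs
  · exact subset_rfl
  · refine Finset.image_subset_image fun b hb => Finset.mem_Icc.2 ⟨?_, (mem_indicesAt.1 hb).1.2⟩
    exact hC.lt_of_mem_indicesAt ha hv hb

lemma stone_mem_keptStones (hL : Disjoint L (domv k I)) (hb : b ∈ indicesAt k I v) :
    J b ∈ keptStones k I J L a v := by
  have hv : v ∉ L := fun hv => by simp [indicesAt_eq_empty (hL.notMem_of_mem_left hv)] at hb
  rw [keptStones, if_neg hv]
  exact Finset.mem_image_of_mem J hb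

@[simp] lemma r_notMem_negP {x : ℕ} {b : Bool} : (SV.r x, b) ∉ negP I J S := by simp [negP]

lemma p_notMem_negP_indicesAt {u x : ℕ} {b : Bool} (h : v ≠ u) :
    (SV.p v x, b) ∉ negP I J (indicesAt k I u) := by
  simp only [negP, Finset.mem_image, mem_indicesAt, Prod.mk.injEq, SV.p.injEq]
  rintro ⟨_, ⟨-, hu⟩, ⟨hv, -⟩, -⟩
  exact h (hv.symm.trans hu)

lemma erase_stonesFrom (hak : a ≤ k) (hb : ¬ bypassed k J a) :
    (stonesFrom k J a).erase (J a) = stonesFrom k J (a + 1) := by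
  rw [stonesFrom_eq_insert hak, Finset.erase_insert (mt bypassed_iff_mem_stonesFrom.2 hb)]

/-- From clauses covering all stones on a predecessor `v` of `i_a`, a clause covering only the one
that `C` puts on `v`, or none if `v ∈ L`. -/
lemma TreeDerivable.discharge_predecessor (hm : 2 ≤ m) (hC : GoodC G m k I J)
    (hL : Disjoint L (domv k I)) (ha : a ∈ Set.Icc 1 k) (hb : ¬ bypassed k J a)
    (hav : I a < v) (hvN : v ≤ G.N) (hv : v ∈ domv k I ∪ L) (hV : v ∈ L → v ∈ V)
    (hKj : (SV.r (J a), true) ∈ K) (hKv : ∀ x b, (SV.p v x, b) ∉ K) (hRm : R ⊆ Finset.Icc 1 m)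
    (hR : ∀ x, x ∈ R ↔ x ∈ stonesFrom k J a ∨ (SV.r x, false) ∈ K)
    (h : ∀ x ∈ Finset.Icc 1 m, x ≠ J a → TreeDerivable (stoneWithLearned G m L)
      (insert (SV.r x, false) (insert (SV.p v x, false) K)) (freeVars (V \ {v}) (insert x R)) s) :
    TreeDerivable (stoneWithLearned G m L)
      (negP I J (indicesAt k I v) ∪ negR (keptStones k I J L a v) ∪ K) (freeVars V R)
      (m * (s + 3) + 1) := by
  by_cases hvL : v ∈ L
  · have hder := eliminate_red_vertex hm (stone_clause_mem (by omega) hvN)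
      (fun x hx => learned_clause_mem hvL hx) hKj hKv (fun x hx => (hR x).2 (Or.inr hx)) hRm
      (hV hvL) h
    have hclause : K ∪ negR (R.erase (J a)) = K ∪ negR (stonesFrom k J (a + 1)) := by
      rw [← erase_stonesFrom ha.2 hb]
      ext l
      simp only [negR, Finset.mem_union, Finset.mem_image, Finset.mem_erase, hR]
      grind
    rw [hclause, Finset.union_comm] at hder
    rw [keptStones, if_pos hvL, indicesAt_eq_empty (hL.notMem_of_mem_left hvL)]
    simpa only [negP, Finset.image_empty, Finset.empty_union] using hder
  · obtain ⟨b, hb1, hbk, rfl⟩ := hv.resolve_right hvL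
    have hbI : b ∈ Set.Icc 1 k := ⟨hb1, hbk⟩
    have hab : a < b := (hC.strictMonoOn.lt_iff_lt ha hbI).1 hav
    have hJ : J b ≠ J a := fun h => hb ⟨b, hab, hbk, h⟩
    have hJR : J b ∈ R := (hR _).2 (Or.inl (mem_stonesFrom.2 ⟨b, ⟨hab.le, hbk⟩, rfl⟩))
    have hder := h (J b) (hC.stone_mem hbI) hJ
    rw [Finset.insert_eq_of_mem hJR] at hder
    rw [keptStones, if_neg hvL, hC.indicesAt_vertex hbI]
    refine (congrArg (TreeDerivable _ · _ _) ?_).mp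
      (hder.mono (freeVars_subset Set.sdiff_subset subset_rfl) (by nlinarith))
    simp only [negP, negR, Finset.image_singleton]
    grind

lemma red_of_not_bypassed (hm : 2 ≤ m) (hC : GoodC G m k I J) (hL : Disjoint L (domv k I))
    (ha : a ∈ Set.Icc 1 k) (hb : ¬ bypassed k J a)
    (h₁ : G.p1 (I a) ∈ domv k I ∪ L) (h₂ : G.p2 (I a) ∈ domv k I ∪ L) :
    TreeDerivable (stoneWithLearned G m L)
      (insert (SV.r (J a), true)
        (negP I J (insert a (predIndices G k I a)) ∪ negR (predStones G k I J L a)))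
      (freeVars L (stonesFrom k J a)) ((2 * m + 1) ^ 2) := by
  have hi := hC.one_le_vertex ha
  have hin := hC.vertex_le ha
  have hne := G.p_ne _ hi hin
  have hlt₁ := G.p1_gt _ hi hin
  have hlt₂ := G.p2_gt _ hi hin
  have hstones := hC.stonesFrom_subset ha.1
  have hkept₁ := (keptStones_subset (L := L) hC ha hlt₁).trans stonesFrom_succ_subset
  let K₀ : Clause SV := {(SV.p (I a) (J a), false), (SV.r (J a), true)}
  have hfirst : ∀ y ∈ Finset.Icc 1 m, y ≠ J a → TreeDerivable (stoneWithLearned G m L)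
      (negP I J (indicesAt k I (G.p1 (I a))) ∪ negR (keptStones k I J L a (G.p1 (I a))) ∪
        insert (SV.r y, false) (insert (SV.p (G.p2 (I a)) y, false) K₀))
      (freeVars (L \ {G.p2 (I a)}) (insert y (stonesFrom k J a))) (m * (1 + 3) + 1) := by
    intro y hy hyj
    refine .discharge_predecessor hm hC hL ha hb hlt₁ (G.p1_le _ hi hin) h₁ (fun h => ⟨h, hne⟩)
      (by simp [K₀]) (by simp [K₀, hne, hlt₁.ne']) (Finset.insert_subset hy hstones)
      (by simp [K₀, or_comm]) fun x hx hxj => ?_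
    convert TreeDerivable.of_mem (induction_clause_mem hi hin (hC.stone_mem ha) hx hy hxj hyj)
      using 1
    simp only [K₀]
    grind
  have hsecond := TreeDerivable.discharge_predecessor (V := L) (R := stonesFrom k J a)
    (K := negP I J (indicesAt k I (G.p1 (I a))) ∪ negR (keptStones k I J L a (G.p1 (I a))) ∪ K₀)
    hm hC hL ha hb hlt₂ (G.p2_le _ hi hin) h₂ id (by simp [K₀])
    (by simp [K₀, hlt₂.ne', p_notMem_negP_indicesAt hne.symm]) hstones
    (by simpa [K₀] using fun x => @hkept₁ x)
    (by simpa only [Finset.union_insert] using hfirst)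
  refine (congrArg (TreeDerivable _ · _ _) ?_).mp (hsecond.mono subset_rfl (by ring_nf; omega))
  simp only [K₀, negP, negR, predIndices, predStones, Finset.image_insert, Finset.image_union]
  grind

end Redness

/-! ### The walk along the clause -/

/-- The state of the walk when `a` is the next index to be treated: `S` holds the indices reached
from `1` so far and `U` the stones still to be resolved on, so that an index of `S` whose direct
supporters may be missing from `S` has its stone in `U`. -/
structure IsPartialClosure (G : StoneDag) (k : ℕ) (I J : ℕ → ℕ) (a : ℕ) (S U : Finset ℕ) :
    Prop where
  one_mem : 1 ∈ S
  subset : S ⊆ Finset.Icc 1 k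
  stones_subset : U ⊆ stonesFrom k J a
  closed : ∀ c ∈ S, J c ∈ U ∨ ∀ b, dsup G k I J b c → b ∈ S

section Walk

variable {G : StoneDag} {m k a : ℕ} {I J : ℕ → ℕ} {L : Set ℕ} {S U : Finset ℕ}

lemma mem_predIndices_of_dsup {b : ℕ} (ha : ¬ bypassed k J a) (h : dsup G k I J b a) :
    b ∈ predIndices G k I a := by
  obtain ⟨ha1, hab, hbk, ⟨-, -, hJ, -⟩ | ⟨-, hv⟩⟩ := h
  · exact (ha ⟨b, hab, hbk, hJ⟩).elim
  · exact Finset.mem_union.2 <| hv.imp (fun hv => mem_indicesAt.2 ⟨⟨ha1.trans hab.le, hbk⟩, hv⟩)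
      (fun hv => mem_indicesAt.2 ⟨⟨ha1.trans hab.le, hbk⟩, hv⟩)

lemma predIndices_subset : predIndices G k I a ⊆ Finset.Icc 1 k :=
  Finset.union_subset (Finset.filter_subset _ _) (Finset.filter_subset _ _)

lemma stone_mem_predStones {b : ℕ} (hL : Disjoint L (domv k I)) (hb : b ∈ predIndices G k I a) :
    J b ∈ predStones G k I J L a :=
  Finset.mem_union.2 <|
    (Finset.mem_union.1 hb).imp (stone_mem_keptStones hL) (stone_mem_keptStones hL)

lemma predStones_subset (hC : GoodC G m k I J) (ha : a ∈ Set.Icc 1 k) :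
    predStones G k I J L a ⊆ stonesFrom k J (a + 1) :=
  have hi := hC.one_le_vertex ha
  have hin := hC.vertex_le ha
  Finset.union_subset (keptStones_subset hC ha (G.p1_gt _ hi hin))
    (keptStones_subset hC ha (G.p2_gt _ hi hin))

lemma eq_of_dsup_of_stone_eq {b c : ℕ} (ha : ¬ bypassed k J a) (hak : a ≤ k) (hca : c < a)
    (hJ : J c = J a) (h : dsup G k I J b c) : b = a := by
  obtain ⟨-, -, hbk, ⟨-, -, hJb, hmax⟩ | ⟨hc, -⟩⟩ := h
  · refine (hmax a hca hak hJ.symm).antisymm' (not_lt.1 fun hab => ?_)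
    exact ha ⟨b, hab, hbk, hJb.trans hJ⟩
  · exact (hc ⟨a, hca, hak, hJ.symm⟩).elim

namespace IsPartialClosure

lemma singleton (hk : 1 ≤ k) : IsPartialClosure G k I J 1 {1} {J 1} where
  one_mem := Finset.mem_singleton_self 1
  subset := by simpa using hk
  stones_subset := by simpa using mem_stonesFrom.2 ⟨1, ⟨le_rfl, hk⟩, rfl⟩
  closed c hc := Or.inl (by rw [Finset.mem_singleton.1 hc]; exact Finset.mem_singleton_self _)

lemma skip (h : IsPartialClosure G k I J a S U) (hak : a ≤ k) (ha : J a ∈ U → bypassed k J a) :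
    IsPartialClosure G k I J (a + 1) S U where
  one_mem := h.one_mem
  subset := h.subset
  stones_subset x hx := by
    have hxa := h.stones_subset hx
    rw [stonesFrom_eq_insert hak] at hxa
    obtain rfl | hxa := Finset.mem_insert.1 hxa
    exacts [bypassed_iff_mem_stonesFrom.1 (ha hx), hxa]
  closed := h.closed

lemma step (h : IsPartialClosure G k I J a S U) (hC : GoodC G m k I J)
    (hL : Disjoint L (domv k I)) (ha : a ∈ Set.Icc 1 k) (hb : ¬ bypassed k J a) :
    IsPartialClosure G k I J (a + 1) (insert a (predIndices G k I a) ∪ S)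
      (predStones G k I J L a ∪ U.erase (J a)) where
  one_mem := Finset.mem_union_right _ h.one_mem
  subset := Finset.union_subset
    (Finset.insert_subset (Finset.mem_Icc.2 ha) predIndices_subset) h.subset
  stones_subset := by
    rw [← erase_stonesFrom ha.2 hb]
    exact Finset.union_subset ((predStones_subset hC ha).trans (erase_stonesFrom ha.2 hb).ge)
      (Finset.erase_subset_erase _ h.stones_subset)
  closed c hc := by
    simp only [Finset.mem_union, Finset.mem_insert, Finset.mem_erase] at hc ⊢
    obtain (rfl | hc) | hc := hc
    · exact Or.inr fun b hb' => Or.inl (Or.inr (mem_predIndices_of_dsup hb hb'))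
    · exact Or.inl (Or.inl (stone_mem_predStones hL hc))
    obtain hcU | hclosed := h.closed c hc
    · by_cases hJ : J c = J a
      · refine Or.inr fun b hb' => Or.inl ?_
        have hck := (Finset.mem_Icc.1 (h.subset hc)).2
        obtain hca | rfl | hac := lt_trichotomy c a
        · exact Or.inl (eq_of_dsup_of_stone_eq hb ha.2 hca hJ hb')
        · exact Or.inr (mem_predIndices_of_dsup hb hb')
        · exact (hb ⟨c, hac, hck, hJ⟩).elim
      · exact Or.inl (Or.inr ⟨hJ, hcU⟩)
    · exact Or.inr fun b hb' => Or.inr (hclosed b hb')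

lemma stones_eq_empty (h : IsPartialClosure G k I J (k + 1) S U) : U = ∅ := by
  simpa [stonesFrom] using h.stones_subset

lemma eq_Icc (h : IsPartialClosure G k I J (k + 1) S U) (hC : GoodC G m k I J) :
    S = Finset.Icc 1 k := by
  refine h.subset.antisymm fun b hb => ?_
  rw [Finset.mem_Icc] at hb
  have hsupp : supp G k I J b 1 := hC.2.2.2.2.2 b hb.1 hb.2
  induction hsupp using Relation.ReflTransGen.head_induction_on with
  | refl => exact h.one_mem
  | head hbc _ ih =>
    have hc := ih ⟨hbc.1, (hbc.2.1.trans_le hbc.2.2.1).le⟩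
    exact (h.closed _ hc).resolve_left (by simp [h.stones_eq_empty]) _ hbc

end IsPartialClosure

lemma exists_partial_derivation (hm : 2 ≤ m) (hC : GoodC G m k I J) (hL : Disjoint L (domv k I))
    (hpred : ∀ ℓ, 1 ≤ ℓ → ℓ ≤ k → ¬ bypassed k J ℓ →
      G.p1 (I ℓ) ∈ domv k I ∪ L ∧ G.p2 (I ℓ) ∈ domv k I ∪ L) (hak : a ≤ k) :
    ∃ S U, IsPartialClosure G k I J (a + 1) S U ∧
      TreeDerivable (stoneWithLearned G m L) (negP I J S ∪ negR U)
        (freeVars L (stonesFrom k J (a + 1))) (a * ((2 * m + 1) ^ 2 + 1) + 1) := by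
  induction a with
  | zero =>
    refine ⟨{1}, {J 1}, .singleton hC.1, ?_⟩
    have hsink := sink_clause_mem (G := G) (L := L) (hC.stone_mem ⟨le_rfl, hC.1⟩)
    simpa [negP, negR, hC.2.1] using TreeDerivable.of_mem hsink
  | succ a ih =>
    obtain ⟨S, U, hSU, hder⟩ := ih (by omega)
    have hvars : freeVars L (stonesFrom k J (a + 1)) ⊆ freeVars L (stonesFrom k J (a + 2)) :=
      freeVars_subset subset_rfl stonesFrom_succ_subset
    by_cases hJU : J (a + 1) ∈ U → bypassed k J (a + 1)
    · exact ⟨S, U, hSU.skip hak hJU, hder.mono hvars (by gcongr; omega)⟩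
    push Not at hJU
    obtain ⟨hJU, hb⟩ := hJU
    have ha : a + 1 ∈ Set.Icc 1 k := ⟨by omega, hak⟩
    obtain ⟨h₁, h₂⟩ := hpred _ ha.1 ha.2 hb
    refine ⟨_, _, hSU.step hC hL ha hb, ?_⟩
    have hsplit : negP I J S ∪ negR U =
        insert (SV.r (J (a + 1)), false) (negP I J S ∪ negR (U.erase (J (a + 1)))) := by
      conv_lhs => rw [← Finset.insert_erase hJU, negR, Finset.image_insert, Finset.union_insert]
      rfl
    have hJ : J (a + 1) ∉ stonesFrom k J (a + 2) := mt bypassed_iff_mem_stonesFrom.2 hb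
    rw [hsplit] at hder
    have hres := (red_of_not_bypassed hm hC hL ha hb h₁ h₂).resolve hder
      (by simp) (by simp) (by simp [hSU.stones_subset hJU])
    refine (congrArg (TreeDerivable _ · _ _) ?_).mp
      (hres.mono (Set.insert_subset hJ hvars) (by linarith))
    simp only [negP, negR, Finset.image_union]
    exact Finset.union_union_union_comm _ _ _ _

end Walk

theorem closure_lemma_general {G : StoneDag} {m k : ℕ} {I J : ℕ → ℕ} {L : Set ℕ} (hm : 2 ≤ m)
    (hC : GoodC G m k I J) (hL : Disjoint L (domv k I))
    (hpred : ∀ ℓ, 1 ≤ ℓ → ℓ ≤ k → ¬ bypassed k J ℓ →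
      G.p1 (I ℓ) ∈ domv k I ∪ L ∧ G.p2 (I ℓ) ∈ domv k I ∪ L) :
    ∃ T, RegTreeDeriv (stoneWithLearned G m L) (negP I J (Finset.Icc 1 k)) T ∧
      T.size ≤ 8 * k * m ^ 2 ∧
      ∀ x ∈ T.resVars, (∃ j, x = SV.r j) ∨ ∃ i j, i ∈ L ∧ x = SV.p i j := by
  obtain ⟨S, U, hSU, hder⟩ := exists_partial_derivation hm hC hL hpred le_rfl
  rw [hSU.eq_Icc hC, hSU.stones_eq_empty, negR, Finset.image_empty, Finset.union_empty] at hder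
  have hfresh : ∀ x ∈ freeVars L (stonesFrom k J (k + 1)), ∀ b,
      (x, b) ∉ negP I J (Finset.Icc 1 k) := by
    rintro (⟨v, j⟩ | j) hv b hmem
    · obtain ⟨a, ha, h⟩ := Finset.mem_image.1 hmem
      cases h
      exact hL.notMem_of_mem_left hv ⟨a, (Finset.mem_Icc.1 ha).1, (Finset.mem_Icc.1 ha).2, rfl⟩
    · exact r_notMem_negP hmem
  obtain ⟨T, hT, hsize, hvars⟩ := hder.exists_regTreeDeriv hfresh
  refine ⟨T, hT, hsize.trans ?_, fun x hx => ?_⟩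
  · have := hC.1
    nlinarith [Nat.mul_le_mul this (Nat.pow_le_pow_left hm 2)]
  · cases x with
    | p v j => exact Or.inr ⟨v, j, hvars _ hx, rfl⟩
    | r j => exact Or.inl ⟨j, rfl⟩

/-- the closure lemma — a regRTI derivation of the non-extendible
clause `C` of size `O(N·m²)`, from the Stone clauses together with the learned
clauses `¬p_{i,j} ∨ r_j` for `i ∈ L`, resolving only on variables `r_j` and on
variables `p_{i,j}` with `i ∉ P`. -/
theorem closure_lemma : ∃ c : ℕ, ∀ (G : StoneDag) (m : ℕ), G.N ≤ m →
    ∀ (k : ℕ) (I J : ℕ → ℕ), GoodC G m k I J →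
    ∀ (P L : Set ℕ), domv k I ⊆ P → (∀ v ∈ L, v ∉ P) →
    (∀ ℓ, 1 ≤ ℓ → ℓ ≤ k → ¬ bypassed k J ℓ →
        G.p1 (I ℓ) ∈ domv k I ∪ L ∧ G.p2 (I ℓ) ∈ domv k I ∪ L) →
    ∃ T : PTree SV,
      RegRTIDeriv
        (stoneClauses G m ∪
          { C | ∃ i j, i ∈ L ∧ 1 ≤ j ∧ j ≤ m ∧
              C = {(SV.p i j, false), (SV.r j, true)} })
        ((Finset.Icc 1 k).image fun a => ((SV.p (I a) (J a), false) : Lit SV)) T ∧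
      T.size ≤ c * G.N * m ^ 2 ∧
      ∀ x ∈ T.resVars, (∃ j, x = SV.r j) ∨ (∃ i j, i ∉ P ∧ x = SV.p i j) := by
  refine ⟨8, fun G m hNm k I J hC P L hP hLP hpred => ?_⟩
  have hkN : k < G.N := hC.length_le.trans_lt G.n_lt_N
  have hL : Disjoint L (domv k I) := Set.disjoint_left.2 fun v hv hvC => hLP v hv (hP hvC)
  obtain ⟨T, hT, hsize, hvars⟩ := closure_lemma_general (by linarith [hC.1]) hC hL hpred
  exact ⟨T, hT.regRTIDeriv, hsize.trans (by gcongr), fun x hx =>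
    (hvars x hx).imp_right fun ⟨i, j, hi, hx⟩ => ⟨i, j, hLP i hi, hx⟩⟩
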